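/- arXiv:0811.3576 — 4 statements merged into one kernel-verified Lean document; each statement's English description precedes it below -/
import Mathlib

section
/- Every infinite semigroup X satisfying properties (1) and (2) is ambitable: there exists a function f : X → [0,1] such that the right orbit {z ↦ f(zx) | x ∈ X} of f is dense in the product space [0,1]^X. -/
open Cardinal

/-!
Call a function from a finite subset of `X` to `X` a *pattern*; since `X` is infinite there are at
most `#X` of them. Well-order the patterns so that each has fewer than `#X` predecessors and choose
recursively, for every pattern `p` with domain `F`, an element `x p` such that `z ↦ z * x p` is
injective on `F` and the set `F * x p` misses the translates chosen earlier, whose union has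
cardinality less than `#X`. The elements `z * x p` are then distinct for distinct pairs `(p, z)`, so
a single function `f` satisfies `f (z * x p) = d (p z)` for all of them, where `d : X → Y` is any
function with dense range. Its orbit realises every pattern with values in the range of `d`.
-/

universe u v

section Cardinality

theorem mk_biUnion_finset_lt {ι : Type u} {α : Type v} {κ : Cardinal.{v}} (hκ : ℵ₀ ≤ κ)
    (s : Finset ι) {t : ι → Set α} (ht : ∀ i ∈ s, #(t i) < κ) : #(⋃ i ∈ s, t i : Set α) < κ := by
  rw [← Finset.sup_set_eq_biUnion]
  refine Finset.sup_induction (p := fun A : Set α => #A < κ) ?_ (fun A hA B hB => ?_) ht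
  · simpa using aleph0_pos.trans_le hκ
  · exact (mk_union_le A B).trans_lt (add_lt_of_lt hκ hA hB)

theorem mk_iUnion_lt_of_finite {ι α : Type u} {κ : Cardinal.{u}} (hκ : ℵ₀ ≤ κ) (hι : #ι < κ)
    {t : ι → Set α} (ht : ∀ i, (t i).Finite) : #(⋃ i, t i) < κ := by
  rcases hκ.eq_or_lt with rfl | hκ
  · have : Finite ι := lt_aleph0_iff_finite.1 hι
    exact lt_aleph0_iff_set_finite.2 (Set.finite_iUnion ht)
  · calc #(⋃ i, t i) ≤ Cardinal.sum fun i => #(t i) := mk_iUnion_le_sum_mk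
      _ ≤ Cardinal.sum fun _ : ι => ℵ₀ := sum_le_sum _ _ fun i => (ht i).lt_aleph0.le
      _ = #ι * ℵ₀ := sum_const' ι ℵ₀
      _ < κ := mul_lt_of_lt hκ.le hι hκ

theorem mk_sigma_finset_arrow_le (X : Type u) [Infinite X] : #(Σ F : Finset X, F → X) ≤ #X :=
  calc #(Σ F : Finset X, F → X) = Cardinal.sum fun F : Finset X => #(F → X) := mk_sigma _
    _ ≤ Cardinal.sum fun _ : Finset X => #X :=
      sum_le_sum _ _ fun F => by
        simpa only [mk_arrow, lift_id, mk_coe_finset, power_natCast] using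
          power_nat_le (aleph0_le_mk X)
    _ = #X := by
      rw [sum_const', mk_finset_of_infinite, mul_eq_self (aleph0_le_mk X)]

end Cardinality

theorem exists_pairwise_disjoint_of_forall_exists_disjoint {ι α : Type u} {β : Type v}
    {κ : Cardinal.{u}} (hκ : ℵ₀ ≤ κ) (hι : #ι ≤ κ) {S : ι → Set β} {B : ι → β → Set α}
    (hB : ∀ i b, (B i b).Finite)
    (h : ∀ i (P : Set α), #P < κ → ∃ b ∈ S i, Disjoint (B i b) P) :
    ∃ x : ι → β, (∀ i, x i ∈ S i) ∧ Pairwise fun i j => Disjoint (B i (x i)) (B j (x j)) := by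
  obtain ⟨_, _, hord⟩ := exists_ord_eq_type_lt ι
  choose pick pick_mem pick_disjoint using h
  have small (i : ι) (prev : ∀ j < i, β) : #(⋃ j : Set.Iio i, B j (prev j j.2)) < κ :=
    mk_iUnion_lt_of_finite hκ ((mk_Iio_lt i hord).trans_le hι) fun j => hB j _
  let x : ι → β := wellFounded_lt.fix fun i prev => pick i _ (small i prev)
  have x_eq (i : ι) : x i = pick i _ (small i fun j _ => x j) := wellFounded_lt.fix_eq _ i
  have disjoint_of_lt {i j : ι} (hij : i < j) : Disjoint (B i (x i)) (B j (x j)) := by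
    have hj : Disjoint (B j (x j)) (⋃ k : Set.Iio j, B k (x k)) := by
      rw [x_eq j]
      exact pick_disjoint j _ _
    exact (Set.disjoint_iUnion_right.1 hj ⟨i, hij⟩).symm
  refine ⟨x, fun i => ?_, fun i j hij => ?_⟩
  · rw [x_eq i]
    exact pick_mem i _ _
  · exact hij.lt_or_gt.elim disjoint_of_lt fun hji => (disjoint_of_lt hji).symm

theorem dense_of_forall_finset_exists_eq {ι : Type*} {Y : ι → Type*} [∀ i, TopologicalSpace (Y i)]
    {D S : Set (∀ i, Y i)} (hD : Dense D)
    (h : ∀ g ∈ D, ∀ F : Finset ι, ∃ s ∈ S, ∀ i ∈ F, s i = g i) : Dense S := by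
  refine dense_closure.1 (hD.mono fun g hg => mem_closure_iff.2 fun U hU hgU => ?_)
  obtain ⟨F, v, hv, hvU⟩ := isOpen_pi_iff.1 hU g hgU
  obtain ⟨s, hsS, hs⟩ := h g hg F
  exact ⟨s, hvU fun i hi => (hs i hi).symm ▸ (hv i hi).2, hsS⟩

theorem exists_denseRange_of_infinite (X Y : Type*) [Infinite X] [TopologicalSpace Y]
    [TopologicalSpace.SeparableSpace Y] [Nonempty Y] : ∃ d : X → Y, DenseRange d := by
  obtain ⟨u, hu⟩ := TopologicalSpace.exists_dense_seq Y
  have surj := Function.invFun_surjective (Infinite.natEmbedding X).injective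
  refine ⟨u ∘ Function.invFun (Infinite.natEmbedding X), ?_⟩
  rwa [DenseRange, surj.range_comp]

/-- The consequence of properties (1) and (2) that drives the construction: every finite set `F` has
a right translate `F * z` that is injectively parametrised by `F` and avoids a prescribed set of
cardinality less than `#X`. -/
def HasAvoidingTranslates (X : Type*) [Mul X] : Prop :=
  ∀ (F : Finset X) (P : Set X), #P < #X →
    ∃ z, Set.InjOn (· * z) (F : Set X) ∧ Disjoint ((· * z) '' (F : Set X)) P

section Mul

variable {X : Type u} [Mul X] [Infinite X]

theorem hasAvoidingTranslates_of_mk_eq_of_mk_lt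
    (h1 : ∀ F : Finset X, #{z : X | ∀ x ∈ F, ∀ y ∈ F, x ≠ y → x * z ≠ y * z} = #X)
    (h2 : ∀ P : Set X, #P < #X → ∀ x : X, #{z : X | x * z ∈ P} < #X) :
    HasAvoidingTranslates X := by
  intro F P hP
  have hlt : #(⋃ x ∈ F, {z : X | x * z ∈ P} : Set X) <
      #{z : X | ∀ x ∈ F, ∀ y ∈ F, x ≠ y → x * z ≠ y * z} := by
    rw [h1 F]
    exact mk_biUnion_finset_lt (aleph0_le_mk X) F fun x _ => h2 P hP x
  obtain ⟨z, hz, hzP⟩ := Set.not_subset.1 fun hsub => (mk_le_mk_of_subset hsub).not_gt hlt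
  refine ⟨z, fun x hx y hy => not_imp_not.1 (hz x hx y hy), ?_⟩
  simpa [Set.disjoint_left] using hzP

theorem HasAvoidingTranslates.exists_injective_mul (hX : HasAvoidingTranslates X) {ι : Type u}
    (hι : #ι ≤ #X) (F : ι → Finset X) :
    ∃ x : ι → X, Function.Injective fun p : Σ i, F i => (p.2 : X) * x p.1 := by
  obtain ⟨x, injOn, disjoint⟩ := exists_pairwise_disjoint_of_forall_exists_disjoint
    (S := fun i => {z | Set.InjOn (· * z) (F i : Set X)})
    (aleph0_le_mk X) hι (fun i z => (F i).finite_toSet.image (· * z)) fun i => hX (F i)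
  refine ⟨x, ?_⟩
  rintro ⟨i, y, hy⟩ ⟨j, y', hy'⟩ (hmul : y * x i = y' * x j)
  obtain rfl : i = j := by
    by_contra hij
    exact Set.disjoint_left.1 (disjoint hij) ⟨y, hy, rfl⟩ ⟨y', hy', hmul.symm⟩
  obtain rfl : y = y' := injOn i hy hy' hmul
  rfl

theorem stmt1_general {Y : Type*} [TopologicalSpace Y] {d : X → Y} (hd : DenseRange d)
    (hX : HasAvoidingTranslates X) : ∃ f : X → Y, DenseRange fun x z : X => f (z * x) := by
  obtain ⟨x, hx⟩ := hX.exists_injective_mul (mk_sigma_finset_arrow_le X) Sigma.fst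
  obtain ⟨f, hf⟩ : ∃ f : X → Y, ∀ (F : Finset X) (c : F → X) (z : F), f (z * x ⟨F, c⟩) = d (c z) :=
    ⟨Function.extend _ (fun p : Σ q : (Σ F : Finset X, F → X), q.1 => d (p.1.2 p.2)) d,
      fun F c z => hx.extend_apply _ _ ⟨⟨F, c⟩, z⟩⟩
  refine ⟨f, dense_of_forall_finset_exists_eq (DenseRange.piMap fun _ : X => hd) ?_⟩
  rintro _ ⟨c, rfl⟩ F
  exact ⟨_, ⟨x ⟨F, fun z => c z⟩, rfl⟩, fun z hz => hf F _ ⟨z, hz⟩⟩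

end Mul

/-- Every infinite semigroup satisfying properties (1) and (2) is ambitable. -/
theorem stmt1 {X : Type*} [Semigroup X] [Infinite X]
    (h1 : ∀ F : Finset X,
      #{z : X | ∀ x ∈ F, ∀ y ∈ F, x ≠ y → x * z ≠ y * z} = #X)
    (h2 : ∀ P : Set X, #↥P < #X → ∀ x : X, #{z : X | x * z ∈ P} < #X)
    :
    ∃ f : X → Set.Icc (0 : ℝ) 1,
      Dense (Set.range fun x : X => fun z : X => f (z * x)) := by
  obtain ⟨d, hd⟩ := exists_denseRange_of_infinite X (Set.Icc (0 : ℝ) 1)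
  exact stmt1_general hd (hasAvoidingTranslates_of_mk_eq_of_mk_lt h1 h2)
end

section
/- Let X be an infinite semigroup satisfying properties (1) and (2). Then a functional μ ∈ M(X) has the property that the mapping ν ↦ μ⋆ν from M(X) to M(X) is continuous for the weak* topologies if and only if μ is ℓ¹-representable. (In other words, the topological centre of the convolution algebra M(X) = ℓ∞(X)* is exactly ℓ¹(X); i.e., ℓ¹(X) is left strongly Arens irregular.) -/
open BoundedContinuousFunction NormedSpace

section ConvDefs

variable {X Y Z : Type*} [TopologicalSpace X] [DiscreteTopology X]
  [TopologicalSpace Y] [DiscreteTopology Y] [TopologicalSpace Z] [DiscreteTopology Z]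

/-- The inner integral: `x ↦ ν (y ↦ f (p x y))`, as a bounded function on `X`. -/
noncomputable def innerConv (p : X → Y → Z) (ν : StrongDual ℝ (Y →ᵇ ℝ)) (f : Z →ᵇ ℝ) : X →ᵇ ℝ :=
  BoundedContinuousFunction.ofNormedAddCommGroup
    (fun x => ν (f.compContinuous ⟨fun y => p x y, continuous_of_discreteTopology⟩))
    continuous_of_discreteTopology (‖ν‖ * ‖f‖)
    (fun x => by
      calc ‖ν (f.compContinuous ⟨fun y => p x y, continuous_of_discreteTopology⟩)‖
          ≤ ‖ν‖ * ‖f.compContinuous ⟨fun y => p x y, continuous_of_discreteTopology⟩‖ :=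
            ν.le_opNorm _
        _ ≤ ‖ν‖ * ‖f‖ := by
            gcongr
            exact f.norm_compContinuous_le _)

/-- The convolution `μ ⋆ ν` along the map `p`:
`(μ ⋆ ν) f = μ (x ↦ ν (y ↦ f (p x y)))`. -/
noncomputable def convMap (p : X → Y → Z) (μ : StrongDual ℝ (X →ᵇ ℝ)) (ν : StrongDual ℝ (Y →ᵇ ℝ)) :
    StrongDual ℝ (Z →ᵇ ℝ) :=
  LinearMap.mkContinuous
    { toFun := fun f => μ (innerConv p ν f)
      map_add' := fun f g => by
        rw [← map_add]
        refine congrArg μ ?_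
        ext x
        simp only [innerConv, coe_ofNormedAddCommGroup, coe_add, Pi.add_apply]
        exact map_add ν (f.compContinuous _) (g.compContinuous _)
      map_smul' := fun c f => by
        simp only [RingHom.id_apply]
        rw [← map_smul]
        refine congrArg μ ?_
        ext x
        simp only [innerConv, coe_ofNormedAddCommGroup, coe_smul, Pi.smul_apply]
        exact map_smul ν c (f.compContinuous _) }
    (‖μ‖ * ‖ν‖)
    (fun f => by
      calc ‖μ (innerConv p ν f)‖ ≤ ‖μ‖ * ‖innerConv p ν f‖ := μ.le_opNorm _
        _ ≤ ‖μ‖ * (‖ν‖ * ‖f‖) := by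
            gcongr
            exact norm_ofNormedAddCommGroup_le _
                (mul_nonneg (norm_nonneg ν) (norm_nonneg f)) _
        _ = ‖μ‖ * ‖ν‖ * ‖f‖ := by ring)

/-- `μ` is representable by an absolutely summable family (an element of `ℓ¹(X)`). -/
def L1Rep (μ : StrongDual ℝ (X →ᵇ ℝ)) : Prop :=
  ∃ g : X → ℝ, Summable (fun x => |g x|) ∧ ∀ f : X →ᵇ ℝ, μ f = ∑' x, g x * f x

/-- A functional is positive if it is nonnegative on nonnegative functions. -/
def PosFunc (μ : StrongDual ℝ (X →ᵇ ℝ)) : Prop :=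
  ∀ f : X →ᵇ ℝ, (∀ x, 0 ≤ f x) → 0 ≤ μ f

end ConvDefs

open Cardinal

/-! We follow the factorization method of Neufang. Let `μ` be in the topological centre. By the
cardinality hypotheses one can choose, for every index `i` of a family of at most `#X` bounded
functions `u i` and every finite `L ⊆ X`, a point `y i L` such that the blocks `L · y i L` are
injective copies of `L` and pairwise disjoint. A single bounded `h` can therefore be prescribed by
`h (x · y i L) = u i x` for `x ∈ L`, and a weak* cluster point `ψ i` of the evaluations at `y i L`,
as `L` grows, satisfies `ψ i (h (x · _)) = u i x` for all `x`, that is, `(μ ⋆ ψ i) h = μ (u i)`.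
Taking for `u` the finite truncations of a bounded function `f` and passing to a further cluster
point, weak* continuity shows that the values of `μ` at these truncations converge to `μ f`, and
this is `ℓ¹`-representability. -/

universe u

section Cardinality

open Set

lemma mk_biUnion_finset_lt_s4 {α β : Type u} {κ : Cardinal.{u}} (hκ : ℵ₀ ≤ κ) (F : Finset α)
    {S : α → Set β} (hS : ∀ a ∈ F, #(S a) < κ) : #(⋃ a ∈ F, S a : Set β) < κ := by
  classical
  induction F using Finset.induction_on with
  | empty => simpa using aleph0_pos.trans_le hκ
  | insert a F _ ih =>
    rw [Finset.set_biUnion_insert]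
    exact (mk_union_le _ _).trans_lt <| add_lt_of_lt hκ (hS a (F.mem_insert_self a))
      (ih fun b hb => hS b (Finset.mem_insert_of_mem hb))

lemma mk_iUnion_lt_of_finite_s4 {J β : Type u} {κ : Cardinal.{u}} (hκ : ℵ₀ ≤ κ) (hJ : #J < κ)
    {S : J → Set β} (hS : ∀ j, (S j).Finite) : #(⋃ j, S j) < κ := by
  rcases finite_or_infinite J with hfin | hinf
  · exact (finite_iUnion hS).lt_aleph0.trans_le hκ
  · calc #(⋃ j, S j) ≤ sum fun j => #(S j) := mk_iUnion_le_sum_mk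
      _ ≤ sum fun _ : J => ℵ₀ := sum_le_sum _ _ fun j => (hS j).lt_aleph0.le
      _ = #J := by rw [sum_const', mul_aleph0_eq (aleph0_le_mk J)]
      _ < κ := hJ

lemma exists_forall_mem_pairwise_disjoint {I Y Z : Type u} {κ : Cardinal.{u}}
    (hκ : ℵ₀ ≤ κ) (hI : #I ≤ κ) {A : I → Set Y} {B : I → Y → Set Z} (hB : ∀ i y, (B i y).Finite)
    (hA : ∀ i (P : Set Z), #P < κ → ∃ y ∈ A i, Disjoint (B i y) P) :
    ∃ y : I → Y, (∀ i, y i ∈ A i) ∧ Pairwise fun i j => Disjoint (B i (y i)) (B j (y j)) := by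
  obtain ⟨r, wo, hr⟩ := exists_ord_eq I
  have exists_next : ∀ i (prev : ∀ j, r j i → Y),
      ∃ y ∈ A i, Disjoint (B i y) (⋃ j : {j // r j i}, B j (prev j j.2)) := fun i prev =>
    hA i _ <| mk_iUnion_lt_of_finite_s4 hκ ((card_typein_lt i hr).trans_le hI) fun j => hB j _
  choose y hyA hyB using exists_next
  let z : I → Y := wo.wf.fix y
  have hz : ∀ i, z i = y i fun j _ => z j := wo.wf.fix_eq y
  have disjoint_of_lt : ∀ i j, r j i → Disjoint (B i (z i)) (B j (z j)) := fun i j hji => by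
    rw [hz i]
    exact (hyB i fun j _ => z j).mono_right (subset_iUnion_of_subset ⟨j, hji⟩ subset_rfl)
  refine ⟨z, fun i => hz i ▸ hyA i _, fun i j hij => ?_⟩
  rcases trichotomous_of r i j with h | h | h
  · exact (disjoint_of_lt j i h).symm
  · exact absurd h hij
  · exact disjoint_of_lt i j h

variable {X Y Z : Type u} [Infinite X] {p : X → Y → Z}

lemma exists_injOn_disjoint_image {F : Finset X} (hF : #X ≤ #{y | InjOn (p · y) F})
    {P : Set Z} (hP : ∀ x ∈ F, #{y | p x y ∈ P} < #X) :
    ∃ y ∈ {y | InjOn (p · y) F}, Disjoint ((p · y) '' F) P := by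
  have not_subset : ¬ {y | InjOn (p · y) F} ⊆ ⋃ x ∈ F, {y | p x y ∈ P} := fun h =>
    ((mk_le_mk_of_subset h).trans_lt (mk_biUnion_finset_lt_s4 (aleph0_le_mk X) F hP)).not_ge hF
  obtain ⟨y, hyF, hyP⟩ := Set.not_subset.1 not_subset
  refine ⟨y, hyF, Set.disjoint_left.2 ?_⟩
  rintro _ ⟨x, hx, rfl⟩ hxP
  exact hyP (mem_biUnion (Finset.mem_coe.2 hx) hxP)

lemma exists_injective_sigma (h1 : ∀ F : Finset X, #X ≤ #{y | InjOn (p · y) F})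
    (h2 : ∀ P : Set Z, #P < #X → ∀ x, #{y | p x y ∈ P} < #X) {I : Type u} (hI : #I ≤ #X)
    (F : I → Finset X) :
    ∃ y : I → Y, Function.Injective fun q : (i : I) × F i => p q.2 (y q.1) := by
  obtain ⟨y, hinj, hdisj⟩ := exists_forall_mem_pairwise_disjoint
    (aleph0_le_mk X) hI (B := fun i y => (p · y) '' F i)
    (fun i y => (F i).finite_toSet.image _)
    fun i P hP => exists_injOn_disjoint_image (h1 (F i)) fun x _ => h2 P hP x
  refine ⟨y, ?_⟩
  rintro ⟨i, x, hx⟩ ⟨j, x', hx'⟩ (hxx' : p x (y i) = p x' (y j))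
  obtain rfl : i = j := by
    by_contra hij
    exact Set.disjoint_left.1 (hdisj hij) (mem_image_of_mem _ hx) (hxx' ▸ mem_image_of_mem _ hx')
  obtain rfl : x = x' := hinj i hx hx' hxx'
  rfl

end Cardinality

section Convolution

open Filter Topology

variable {X Y Z : Type*} [TopologicalSpace X] [DiscreteTopology X]
  [TopologicalSpace Y] [DiscreteTopology Y] [TopologicalSpace Z]

lemma continuous_innerConv_apply (p : X → Y → Z) (h : Z →ᵇ ℝ) (x : X) :
    Continuous fun ν : WeakDual ℝ (Y →ᵇ ℝ) => innerConv p (WeakDual.toStrongDual ν) h x :=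
  WeakDual.eval_continuous _

/-- The topological centre: the functionals `μ` for which `ν ↦ μ ⋆ ν` is weak* continuous, where
`⋆` is the convolution along `p`. -/
def topologicalCentre (p : X → Y → Z) : Set (StrongDual ℝ (X →ᵇ ℝ)) :=
  {μ | Continuous fun ν : WeakDual ℝ (Y →ᵇ ℝ) =>
    StrongDual.toWeakDual (convMap p μ (WeakDual.toStrongDual ν))}

lemma continuous_apply_innerConv {p : X → Y → Z} {μ : StrongDual ℝ (X →ᵇ ℝ)}
    (hμ : μ ∈ topologicalCentre p) (h : Z →ᵇ ℝ) :
    Continuous fun ν : WeakDual ℝ (Y →ᵇ ℝ) => μ (innerConv p (WeakDual.toStrongDual ν) h) :=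
  (WeakDual.eval_continuous h).comp hμ

lemma L1Rep.mem_topologicalCentre {μ : StrongDual ℝ (X →ᵇ ℝ)} (hμ : L1Rep μ) (p : X → Y → Z) :
    μ ∈ topologicalCentre p := by
  obtain ⟨g, hg, hμg⟩ := hμ
  refine WeakDual.continuous_of_continuous_eval fun f => ?_
  let φ : X → Y →ᵇ ℝ := fun x =>
    g x • f.compContinuous ⟨p x, continuous_of_discreteTopology⟩
  have hφ : Summable φ := by
    refine Summable.of_norm_bounded (hg.mul_right ‖f‖) fun x => ?_
    rw [norm_smul, Real.norm_eq_abs]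
    gcongr
    exact f.norm_compContinuous_le _
  have apply_eq : ∀ ν : WeakDual ℝ (Y →ᵇ ℝ), μ (innerConv p (WeakDual.toStrongDual ν) f) =
      ν (∑' x, φ x) := fun ν =>
    calc μ (innerConv p (WeakDual.toStrongDual ν) f)
        = ∑' x, g x * innerConv p (WeakDual.toStrongDual ν) f x := hμg _
      _ = ∑' x, WeakDual.toStrongDual ν (φ x) :=
        tsum_congr fun x => (map_smul (WeakDual.toStrongDual ν) (g x) _).symm
      _ = ν (∑' x, φ x) := (ContinuousLinearMap.map_tsum _ hφ).symm
  exact (WeakDual.eval_continuous _).congr fun ν => (apply_eq ν).symm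

variable {J : Type*} {p : X → Y → Z} {h : Z →ᵇ ℝ} {ν : J → StrongDual ℝ (Y →ᵇ ℝ)} {C : ℝ}
  {f : X →ᵇ ℝ}

lemma exists_tendsto_innerConv_eq (U : Ultrafilter J) (hν : ∀ j, ‖ν j‖ ≤ C)
    (hf : ∀ x, Tendsto (fun j => innerConv p (ν j) h x) U (𝓝 (f x))) :
    ∃ ψ : WeakDual ℝ (Y →ᵇ ℝ), ‖WeakDual.toStrongDual ψ‖ ≤ C ∧
      Tendsto (fun j => StrongDual.toWeakDual (ν j)) U (𝓝 ψ) ∧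
      innerConv p (WeakDual.toStrongDual ψ) h = f := by
  obtain ⟨ψ, hψC, hψ⟩ := (WeakDual.isCompact_closedBall (𝕜 := ℝ) (E := Y →ᵇ ℝ) 0 C)
    |>.ultrafilter_le_nhds (U.map fun j => StrongDual.toWeakDual (ν j))
    (tendsto_principal.2 <| .of_forall fun j => mem_closedBall_zero_iff.2 (hν j))
  refine ⟨ψ, mem_closedBall_zero_iff.1 hψC, hψ, ?_⟩
  ext x
  exact tendsto_nhds_unique ((continuous_innerConv_apply p h x).tendsto ψ |>.comp hψ) (hf x)

lemma exists_innerConv_eq_of_tendsto {l : Filter J} [l.NeBot] (hν : ∀ j, ‖ν j‖ ≤ C)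
    (hf : ∀ x, Tendsto (fun j => innerConv p (ν j) h x) l (𝓝 (f x))) :
    ∃ ψ : StrongDual ℝ (Y →ᵇ ℝ), ‖ψ‖ ≤ C ∧ innerConv p ψ h = f := by
  obtain ⟨ψ, hψC, -, hψ⟩ := exists_tendsto_innerConv_eq (Ultrafilter.of l) hν
    fun x => (hf x).mono_left (Ultrafilter.of_le l)
  exact ⟨WeakDual.toStrongDual ψ, hψC, hψ⟩

lemma tendsto_apply_innerConv {μ : StrongDual ℝ (X →ᵇ ℝ)} (hμ : μ ∈ topologicalCentre p)
    {l : Filter J} (hν : ∀ j, ‖ν j‖ ≤ C)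
    (hf : ∀ x, Tendsto (fun j => innerConv p (ν j) h x) l (𝓝 (f x))) :
    Tendsto (fun j => μ (innerConv p (ν j) h)) l (𝓝 (μ f)) := by
  rw [tendsto_iff_ultrafilter]
  intro U hU
  obtain ⟨ψ, -, hνψ, rfl⟩ := exists_tendsto_innerConv_eq U hν fun x => (hf x).mono_left hU
  exact (continuous_apply_innerConv hμ h).tendsto ψ |>.comp hνψ

end Convolution

section Truncation

open Filter Topology

variable {X : Type*} [TopologicalSpace X] [DiscreteTopology X]

/-- The restriction of the bounded function `f` to the finite set `K`, extended by zero; written as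
a finite sum of multiples of indicators of points, so that functionals can be evaluated on it. -/
noncomputable def truncation (f : X →ᵇ ℝ) (K : Finset X) : X →ᵇ ℝ :=
  ∑ x ∈ K, f x • indicator {x} (isClopen_discrete {x})

lemma coe_truncation (f : X →ᵇ ℝ) (K : Finset X) :
    ⇑(truncation f K) = (K : Set X).indicator f := by
  classical
  ext y
  simp [truncation, BoundedContinuousFunction.indicator, Set.indicator_apply,
    Pi.single_apply]

lemma norm_truncation_le (f : X →ᵇ ℝ) (K : Finset X) : ‖truncation f K‖ ≤ ‖f‖ := by
  refine (norm_le (norm_nonneg f)).2 fun x => ?_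
  rw [coe_truncation]
  exact (norm_indicator_le_norm_self f x).trans (f.norm_coe_le_norm x)

lemma tendsto_truncation_apply (f : X →ᵇ ℝ) (x : X) :
    Tendsto (fun K => truncation f K x) atTop (𝓝 (f x)) := by
  refine tendsto_const_nhds.congr' ?_
  filter_upwards [eventually_ge_atTop {x}] with K hK
  rw [coe_truncation, Set.indicator_of_mem (hK (Finset.mem_singleton_self x))]

lemma l1Rep_of_tendsto_truncation {μ : StrongDual ℝ (X →ᵇ ℝ)}
    (hμ : ∀ f, Tendsto (fun K => μ (truncation f K)) atTop (𝓝 (μ f))) : L1Rep μ := by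
  let g : X → ℝ := fun x => μ (indicator {x} (isClopen_discrete {x}))
  have hasSum : ∀ f : X →ᵇ ℝ, HasSum (fun x => g x * f x) (μ f) := fun f =>
    (hμ f).congr fun K => by simp [truncation, g, mul_comm]
  have summable : Summable g := by simpa using (hasSum 1).summable
  exact ⟨g, summable.abs, fun f => (hasSum f).tsum_eq.symm⟩

end Truncation

section Factorization

open Filter Set Topology

variable {X Y Z : Type u} [Infinite X] [TopologicalSpace X] [DiscreteTopology X]
  [TopologicalSpace Z] [DiscreteTopology Z] {p : X → Y → Z}

lemma exists_forall_apply_eq (h1 : ∀ F : Finset X, #X ≤ #{y | InjOn (p · y) F})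
    (h2 : ∀ P : Set Z, #P < #X → ∀ x, #{y | p x y ∈ P} < #X) {I : Type u} (hI : #I ≤ #X)
    {u : I → X →ᵇ ℝ} {C : ℝ} (hu : ∀ i, ‖u i‖ ≤ C) :
    ∃ (h : Z →ᵇ ℝ) (y : I → Finset X → Y), ∀ i L, ∀ x ∈ L, h (p x (y i L)) = u i x := by
  have card_le : #(I × Finset X) ≤ #X := by
    rw [mk_prod, lift_id, lift_id, mk_finset_of_infinite]
    exact mul_le_of_le (aleph0_le_mk X) hI le_rfl
  obtain ⟨y, hy⟩ := exists_injective_sigma h1 h2 card_le Prod.snd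
  let block : ((i : I × Finset X) × i.2) ↪ Z := ⟨_, hy⟩
  let v : ((i : I × Finset X) × i.2) →ᵇ ℝ :=
    ofNormedAddCommGroupDiscrete (fun q => u q.1.1 q.2) C
      fun q => ((u q.1.1).norm_coe_le_norm q.2).trans (hu q.1.1)
  exact ⟨extend block v 0, fun i L => y (i, L),
    fun i L x hx => extend_apply block v 0 ⟨(i, L), x, hx⟩⟩

variable [TopologicalSpace Y] [DiscreteTopology Y]

lemma exists_forall_innerConv_eq (h1 : ∀ F : Finset X, #X ≤ #{y | InjOn (p · y) F})
    (h2 : ∀ P : Set Z, #P < #X → ∀ x, #{y | p x y ∈ P} < #X) {I : Type u} (hI : #I ≤ #X)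
    {u : I → X →ᵇ ℝ} {C : ℝ} (hu : ∀ i, ‖u i‖ ≤ C) :
    ∃ (h : Z →ᵇ ℝ) (ψ : I → StrongDual ℝ (Y →ᵇ ℝ)),
      ∀ i, ‖ψ i‖ ≤ 1 ∧ innerConv p (ψ i) h = u i := by
  obtain ⟨h, y, hy⟩ := exists_forall_apply_eq h1 h2 hI hu
  have norm_evalCLM_le : ∀ y : Y, ‖(evalCLM ℝ y : StrongDual ℝ (Y →ᵇ ℝ))‖ ≤ 1 := fun y =>
    ContinuousLinearMap.opNorm_le_bound _ zero_le_one fun g =>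
      (g.norm_coe_le_norm y).trans_eq (one_mul _).symm
  have tendsto_eval : ∀ i x, Tendsto
      (fun L => innerConv p (evalCLM ℝ (y i L) : StrongDual ℝ (Y →ᵇ ℝ)) h x) atTop
      (𝓝 (u i x)) := fun i x => by
    refine tendsto_const_nhds.congr' ?_
    filter_upwards [eventually_ge_atTop {x}] with L hL
    exact (hy i L x (hL (Finset.mem_singleton_self x))).symm
  choose ψ hψ using fun i =>
    exists_innerConv_eq_of_tendsto (fun L => norm_evalCLM_le (y i L)) (tendsto_eval i)
  exact ⟨h, ψ, hψ⟩

theorem stmt4_general (h1 : ∀ F : Finset X, #X ≤ #{y | InjOn (p · y) F})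
    (h2 : ∀ P : Set Z, #P < #X → ∀ x, #{y | p x y ∈ P} < #X) (μ : StrongDual ℝ (X →ᵇ ℝ)) :
    μ ∈ topologicalCentre p ↔ L1Rep μ := by
  refine ⟨fun hμ => l1Rep_of_tendsto_truncation fun f => ?_, fun hμ => hμ.mem_topologicalCentre p⟩
  obtain ⟨h, ψ, hψ⟩ :=
    exists_forall_innerConv_eq h1 h2 (mk_finset_of_infinite X).le (norm_truncation_le f)
  have tendsto_innerConv : ∀ x, Tendsto (fun K => innerConv p (ψ K) h x) atTop (𝓝 (f x)) := by
    simpa only [(hψ _).2] using tendsto_truncation_apply f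
  simpa only [(hψ _).2] using tendsto_apply_innerConv hμ (fun K => (hψ K).1) tendsto_innerConv

end Factorization

/-- For an infinite semigroup satisfying (1) and (2), the topological centre of the
convolution algebra `M(X)` is exactly `ℓ¹(X)`. -/
theorem stmt4 {X : Type*} [Semigroup X] [TopologicalSpace X] [DiscreteTopology X] [Infinite X]
    (h1 : ∀ F : Finset X,
      #{z : X | ∀ x ∈ F, ∀ y ∈ F, x ≠ y → x * z ≠ y * z} = #X)
    (h2 : ∀ P : Set X, #↥P < #X → ∀ x : X, #{z : X | x * z ∈ P} < #X)
    (μ : StrongDual ℝ (X →ᵇ ℝ)) :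
    (Continuous fun ν : WeakDual ℝ (X →ᵇ ℝ) =>
      StrongDual.toWeakDual (convMap (· * ·) μ (WeakDual.toStrongDual ν))) ↔ L1Rep μ :=
  stmt4_general (fun F => by
    simpa only [Set.injOn_iff_pairwise_ne, Set.Pairwise, Finset.mem_coe] using (h1 F).ge) h2 μ
end

section
/- Let X be a semigroup acting on a set Y (both discrete) via m : X × Y → Y with m(s, m(s', y)) = m(ss', y). Let μ₀ ∈ M(X) be positive and ℓ¹-representable, and let ν₀ ∈ M(Y) be positive. Then the mapping (μ, ν) ↦ μ⋆ν, restricted to the set of pairs of positive functionals in M(X) × M(Y) with the product of the weak* topologies, is jointly continuous at (μ₀, ν₀). -/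
/-! Write `(μ ⋆ ν) f = μ h`, where `h x = ν (f (p x ·))`. As `ν → ν₀` weak* with bounded norms,
`h` converges pointwise and boundedly to `h₀ x = ν₀ (f (p x ·))`. Positive functionals `μ → μ₀` with
`μ₀` in `ℓ¹` are tight: `μ₀` gives arbitrarily small mass to the complement of some finite set, and
hence so does `μ` eventually. So bounded pointwise convergence `h → h₀` may be treated as uniform
convergence on a finite set, and `μ h → μ₀ h₀`. -/

open BoundedContinuousFunction NormedSpace

open Filter Topology

section Positive

variable {ι X : Type*} [TopologicalSpace X] {μ : StrongDual ℝ (X →ᵇ ℝ)}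

theorem PosFunc.monotone (hμ : PosFunc μ) : Monotone μ :=
  (monotone_iff_map_nonneg μ).2 hμ

theorem PosFunc.abs_apply_le (hμ : PosFunc μ) {f g : X →ᵇ ℝ} (h : |f| ≤ g) : |μ f| ≤ μ g := by
  obtain ⟨hfg, hnfg⟩ := abs_le'.1 h
  refine abs_le'.2 ⟨hμ.monotone hfg, ?_⟩
  rw [← map_neg]
  exact hμ.monotone hnfg

theorem PosFunc.norm_le_apply_one (hμ : PosFunc μ) : ‖μ‖ ≤ μ 1 := by
  refine μ.opNorm_le_bound (hμ 1 fun _ => zero_le_one) fun f => ?_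
  have hf : |f| ≤ ‖f‖ • (1 : X →ᵇ ℝ) := fun x => by simpa using f.norm_coe_le_norm x
  simpa [mul_comm] using hμ.abs_apply_le hf

theorem isBoundedUnder_norm_of_posFunc {l : Filter ι} {ν : ι → WeakDual ℝ (X →ᵇ ℝ)}
    {ν₀ : WeakDual ℝ (X →ᵇ ℝ)} (hpos : ∀ᶠ i in l, PosFunc (WeakDual.toStrongDual (ν i)))
    (hν : Tendsto ν l (𝓝 ν₀)) :
    l.IsBoundedUnder (· ≤ ·) fun i => ‖WeakDual.toStrongDual (ν i)‖ := by
  have hmass : Tendsto (fun i => ν i 1) l (𝓝 (ν₀ 1)) :=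
    tendsto_iff_forall_eval_tendsto_topDualPairing.1 hν 1
  exact hmass.isBoundedUnder_le.mono_le (hpos.mono fun _ hi => hi.norm_le_apply_one)

end Positive

section Tightness

variable {ι X : Type*} [TopologicalSpace X] [DiscreteTopology X]

/-- The indicator function of the complement of a finite set `S`. Applied to it, a positive
functional returns the mass it leaves outside `S`, so that it measures tightness. -/
noncomputable def complIndicator (S : Finset X) : X →ᵇ ℝ :=
  BoundedContinuousFunction.indicator (S : Set X)ᶜ (isClopen_discrete _)

theorem complIndicator_of_mem {S : Finset X} {x : X} (hx : x ∈ S) : complIndicator S x = 0 :=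
  Set.indicator_of_notMem (by simpa using hx) _

theorem complIndicator_of_notMem {S : Finset X} {x : X} (hx : x ∉ S) : complIndicator S x = 1 :=
  Set.indicator_of_mem (by simpa using hx) _

theorem complIndicator_nonneg (S : Finset X) (x : X) : 0 ≤ complIndicator S x :=
  Set.indicator_nonneg (fun _ _ => zero_le_one) x

theorem L1Rep.tendsto_complIndicator {μ : StrongDual ℝ (X →ᵇ ℝ)} (hμ : L1Rep μ) :
    Tendsto (fun S => μ (complIndicator S)) atTop (𝓝 0) := by
  obtain ⟨g, -, hg⟩ := hμ
  refine (tendsto_tsum_compl_atTop_zero g).congr fun S => ?_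
  rw [hg]
  refine (tsum_subtype {x | x ∉ S} g).trans (tsum_congr fun x => ?_)
  by_cases hx : x ∈ S
  · simp [complIndicator_of_mem, hx]
  · simp [complIndicator_of_notMem, hx]

theorem PosFunc.abs_apply_le_sum_add {μ : StrongDual ℝ (X →ᵇ ℝ)} (hμ : PosFunc μ) (h : X →ᵇ ℝ)
    (S : Finset X) : |μ h| ≤ (∑ x ∈ S, |h x|) * μ 1 + ‖h‖ * μ (complIndicator S) := by
  have hle : |h| ≤ (∑ x ∈ S, |h x|) • (1 : X →ᵇ ℝ) + ‖h‖ • complIndicator S := fun x => by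
    change |h x| ≤ (∑ x ∈ S, |h x|) * 1 + ‖h‖ * complIndicator S x
    by_cases hx : x ∈ S
    · simpa [complIndicator_of_mem hx] using
        Finset.single_le_sum (fun y _ => abs_nonneg (h y)) hx
    · rw [complIndicator_of_notMem hx, mul_one, mul_one]
      exact le_add_of_nonneg_of_le (Finset.sum_nonneg fun y _ => abs_nonneg (h y))
        (h.norm_coe_le_norm x)
  simpa using hμ.abs_apply_le hle

variable {l : Filter ι} {μ : ι → StrongDual ℝ (X →ᵇ ℝ)} {μ₀ : StrongDual ℝ (X →ᵇ ℝ)}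
  {h : ι → X →ᵇ ℝ}

theorem L1Rep.tendsto_apply_zero (hμ₀ : L1Rep μ₀) (hpos : ∀ᶠ i in l, PosFunc (μ i))
    (hμ : ∀ k, Tendsto (fun i => μ i k) l (𝓝 (μ₀ k)))
    (hbdd : l.IsBoundedUnder (· ≤ ·) fun i => ‖h i‖)
    (hh : ∀ x, Tendsto (fun i => h i x) l (𝓝 0)) :
    Tendsto (fun i => μ i (h i)) l (𝓝 0) := by
  obtain ⟨C, hC⟩ := hbdd
  rw [Metric.tendsto_nhds]
  intro ε hε
  obtain ⟨S, hS⟩ : ∃ S, C * μ₀ (complIndicator S) < ε := by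
    have hlim := hμ₀.tendsto_complIndicator.const_mul C
    rw [mul_zero] at hlim
    exact (hlim.eventually_lt_const hε).exists
  have hbound : Tendsto
      (fun i => (∑ x ∈ S, |h i x|) * μ i 1 + C * μ i (complIndicator S)) l
      (𝓝 (C * μ₀ (complIndicator S))) := by
    have hsum : Tendsto (fun i => ∑ x ∈ S, |h i x|) l (𝓝 0) := by
      simpa using tendsto_finsetSum S fun x _ => (hh x).abs
    simpa using (hsum.mul (hμ 1)).add ((hμ (complIndicator S)).const_mul C)
  filter_upwards [hpos, eventually_map.1 hC, hbound.eventually_lt_const hS] with i hi hCi hlt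
  rw [Real.dist_0_eq_abs]
  calc |μ i (h i)|
      ≤ (∑ x ∈ S, |h i x|) * μ i 1 + ‖h i‖ * μ i (complIndicator S) :=
        hi.abs_apply_le_sum_add (h i) S
    _ ≤ (∑ x ∈ S, |h i x|) * μ i 1 + C * μ i (complIndicator S) := by
        gcongr
        exact hi _ (complIndicator_nonneg S)
    _ < ε := hlt

theorem L1Rep.tendsto_apply {h₀ : X →ᵇ ℝ} (hμ₀ : L1Rep μ₀) (hpos : ∀ᶠ i in l, PosFunc (μ i))
    (hμ : ∀ k, Tendsto (fun i => μ i k) l (𝓝 (μ₀ k)))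
    (hbdd : l.IsBoundedUnder (· ≤ ·) fun i => ‖h i‖)
    (hh : ∀ x, Tendsto (fun i => h i x) l (𝓝 (h₀ x))) :
    Tendsto (fun i => μ i (h i)) l (𝓝 (μ₀ h₀)) := by
  have hbdd_sub : l.IsBoundedUnder (· ≤ ·) fun i => ‖h i - h₀‖ := by
    obtain ⟨C, hC⟩ := hbdd
    exact ⟨C + ‖h₀‖, eventually_map.2 <| (eventually_map.1 hC).mono fun i hi =>
      (norm_sub_le _ _).trans (add_le_add_left hi _)⟩
  have hsub : Tendsto (fun i => μ i (h i - h₀)) l (𝓝 0) :=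
    hμ₀.tendsto_apply_zero hpos hμ hbdd_sub fun x => by
      simpa using (hh x).sub_const (h₀ x)
  simpa using hsub.add (hμ h₀)

end Tightness

section Convolution

variable {ι X Y Z : Type*} [TopologicalSpace X] [DiscreteTopology X]
  [TopologicalSpace Y] [DiscreteTopology Y] [TopologicalSpace Z]

theorem norm_innerConv_le (p : X → Y → Z) (ν : StrongDual ℝ (Y →ᵇ ℝ)) (f : Z →ᵇ ℝ) :
    ‖innerConv p ν f‖ ≤ ‖ν‖ * ‖f‖ :=
  norm_ofNormedAddCommGroup_le _ (by positivity) _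

theorem tendsto_convMap (p : X → Y → Z) {l : Filter ι}
    {μ : ι → StrongDual ℝ (X →ᵇ ℝ)} {μ₀ : StrongDual ℝ (X →ᵇ ℝ)}
    {ν : ι → StrongDual ℝ (Y →ᵇ ℝ)} {ν₀ : StrongDual ℝ (Y →ᵇ ℝ)}
    (hμ₀ : L1Rep μ₀) (hpos : ∀ᶠ i in l, PosFunc (μ i))
    (hμ : ∀ k, Tendsto (fun i => μ i k) l (𝓝 (μ₀ k)))
    (hbdd : l.IsBoundedUnder (· ≤ ·) fun i => ‖ν i‖)
    (hν : ∀ k, Tendsto (fun i => ν i k) l (𝓝 (ν₀ k))) (f : Z →ᵇ ℝ) :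
    Tendsto (fun i => convMap p (μ i) (ν i) f) l (𝓝 (convMap p μ₀ ν₀ f)) := by
  have hbdd_inner : l.IsBoundedUnder (· ≤ ·) fun i => ‖innerConv p (ν i) f‖ := by
    obtain ⟨C, hC⟩ := hbdd
    exact ⟨C * ‖f‖, eventually_map.2 <| (eventually_map.1 hC).mono fun i hi =>
      (norm_innerConv_le p (ν i) f).trans (by gcongr)⟩
  exact hμ₀.tendsto_apply hpos hμ hbdd_inner fun x => hν _

theorem stmt10_general (p : X → Y → Z) {μ₀ : StrongDual ℝ (X →ᵇ ℝ)} {ν₀ : StrongDual ℝ (Y →ᵇ ℝ)}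
    {s : Set (WeakDual ℝ (X →ᵇ ℝ) × WeakDual ℝ (Y →ᵇ ℝ))} (hμ₀ : L1Rep μ₀)
    (hpos : ∀ q ∈ s, PosFunc (WeakDual.toStrongDual q.1))
    (hbdd : (𝓝[s] (StrongDual.toWeakDual μ₀, StrongDual.toWeakDual ν₀)).IsBoundedUnder (· ≤ ·)
      fun q => ‖WeakDual.toStrongDual q.2‖) :
    ContinuousWithinAt
      (fun q : WeakDual ℝ (X →ᵇ ℝ) × WeakDual ℝ (Y →ᵇ ℝ) =>
        StrongDual.toWeakDual (convMap p (WeakDual.toStrongDual q.1) (WeakDual.toStrongDual q.2)))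
      s (StrongDual.toWeakDual μ₀, StrongDual.toWeakDual ν₀) :=
  tendsto_iff_forall_eval_tendsto_topDualPairing.2 <|
    tendsto_convMap p hμ₀ (eventually_mem_nhdsWithin.mono hpos)
      (tendsto_iff_forall_eval_tendsto_topDualPairing.1 continuousWithinAt_fst) hbdd
      (tendsto_iff_forall_eval_tendsto_topDualPairing.1 continuousWithinAt_snd)

end Convolution

/-- Joint weak* continuity of convolution at a pair of positive functionals, the first of
which is `ℓ¹`-representable, within the set of pairs of positive functionals. -/
theorem stmt10 {X Y : Type*} [Semigroup X] [TopologicalSpace X] [DiscreteTopology X]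
    [TopologicalSpace Y] [DiscreteTopology Y]
    (m : X × Y → Y) (hm : ∀ s s' : X, ∀ y : Y, m (s, m (s', y)) = m (s * s', y))
    (μ₀ : StrongDual ℝ (X →ᵇ ℝ)) (ν₀ : StrongDual ℝ (Y →ᵇ ℝ))
    (hμ₀pos : PosFunc μ₀) (hμ₀ : L1Rep μ₀) (hν₀pos : PosFunc ν₀) :
    ContinuousWithinAt
      (fun q : WeakDual ℝ (X →ᵇ ℝ) × WeakDual ℝ (Y →ᵇ ℝ) =>
        StrongDual.toWeakDual (convMap (fun x y => m (x, y))
          (WeakDual.toStrongDual q.1) (WeakDual.toStrongDual q.2)))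
      {q : WeakDual ℝ (X →ᵇ ℝ) × WeakDual ℝ (Y →ᵇ ℝ) |
        PosFunc (WeakDual.toStrongDual q.1) ∧ PosFunc (WeakDual.toStrongDual q.2)}
      (StrongDual.toWeakDual μ₀, StrongDual.toWeakDual ν₀) := by
  refine stmt10_general _ hμ₀ (fun _ hq => hq.1) ?_
  exact isBoundedUnder_norm_of_posFunc (eventually_mem_nhdsWithin.mono fun _ hq => hq.2)
    continuousWithinAt_snd
end

section
/- Let X be a semigroup with the discrete topology, μ ∈ M(X) and f ∈ U_b(X). If the mapping ν ↦ μ⋆ν from K (with the weak* topology) to M(X) (with the weak* topology) is continuous, then the map g ↦ μ(g) is continuous on the closure of the right orbit of f, where that closure carries the topology of pointwise convergence (every element of this closure is a bounded function on X, hence lies in U_b(X)). -/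
open BoundedContinuousFunction NormedSpace

/-- Apply a functional to a plain function, when it is (the coercion of) a bounded function. -/
noncomputable def applyDual {X : Type*} [TopologicalSpace X] [DiscreteTopology X]
    (mu : StrongDual ℝ (X →ᵇ ℝ)) (g : X → ℝ) : ℝ :=
  letI := Classical.propDecidable (∃ f : X →ᵇ ℝ, ⇑f = g)
  if h : ∃ f : X →ᵇ ℝ, ⇑f = g then mu h.choose else 0

/-!
Let `K` be the weak* closure of the point evaluations. The map `Φ : ν ↦ (x ↦ ν (y ↦ f (p x y)))` is
continuous from `K` to the topology of pointwise convergence and sends `δ_y` to the translate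
`x ↦ f (p x y)`. As `K` is weak* compact, `Φ` is a quotient map of `K` onto the closure of the
orbit of `f`. Since `(μ ⋆ ν) f = μ (Φ ν)`, continuity of `ν ↦ (μ ⋆ ν) f` on `K` descends along `Φ`
to continuity of `μ` on this closure.
-/

section QuotientOfCompact

variable {A B C : Type*} [TopologicalSpace A] [TopologicalSpace B] [T2Space B] [TopologicalSpace C]

theorem continuousOn_image_of_isCompact_of_comp {s : Set A} {g : A → B} {h : B → C}
    (hs : IsCompact s) (hg : ContinuousOn g s) (hhg : ContinuousOn (h ∘ g) s) :
    ContinuousOn h (g '' s) := by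
  have : CompactSpace s := isCompact_iff_compactSpace.mp hs
  have hquot : Topology.IsQuotientMap (s.imageFactorization g) :=
    .of_surjective_continuous Set.imageFactorization_surjective
      (hg.domRestrict.subtype_mk fun x => Set.mem_image_of_mem g x.2)
  rw [continuousOn_iff_continuous_domRestrict, hquot.continuous_iff]
  exact hhg.domRestrict

end QuotientOfCompact

section EvalClosure

variable (𝕜 : Type*) {X : Type*} [NontriviallyNormedField 𝕜] [TopologicalSpace X]

theorem norm_evalCLM_le_one {E : Type*} [SeminormedAddCommGroup E] [NormedSpace 𝕜 E] (x : X) :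
    ‖(evalCLM 𝕜 x : (X →ᵇ E) →L[𝕜] E)‖ ≤ 1 :=
  ContinuousLinearMap.opNorm_le_bound _ zero_le_one fun g =>
    (g.norm_coe_le_norm x).trans_eq (one_mul ‖g‖).symm

variable (X)

/-- The weak* closure `K` of the point evaluations `δ_x` in the dual of the bounded continuous
functions on `X`. For discrete `X` this is the compactification on which the continuity of
`ν ↦ μ ⋆ ν` is tested. -/
def evalClosure : Set (WeakDual 𝕜 (X →ᵇ 𝕜)) :=
  closure (Set.range fun x : X => StrongDual.toWeakDual (evalCLM 𝕜 x))

theorem isCompact_evalClosure [ProperSpace 𝕜] : IsCompact (evalClosure 𝕜 X) := by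
  have hball := WeakDual.isCompact_closedBall (𝕜 := 𝕜) (E := X →ᵇ 𝕜) 0 1
  refine hball.closure_of_subset ?_
  rintro _ ⟨x, rfl⟩
  exact mem_closedBall_zero_iff.mpr (norm_evalCLM_le_one 𝕜 x)

end EvalClosure

section Convolution

variable {X Y Z : Type*} [TopologicalSpace X] [DiscreteTopology X]
  [TopologicalSpace Y] [DiscreteTopology Y] [TopologicalSpace Z]

theorem applyDual_coe (μ : StrongDual ℝ (X →ᵇ ℝ)) (g : X →ᵇ ℝ) : applyDual μ g = μ g := by
  have hg : ∃ g' : X →ᵇ ℝ, ⇑g' = g := ⟨g, rfl⟩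
  rw [applyDual, dif_pos hg]
  exact congrArg μ (DFunLike.coe_injective hg.choose_spec)

theorem convMap_apply (p : X → Y → Z) (μ : StrongDual ℝ (X →ᵇ ℝ)) (ν : StrongDual ℝ (Y →ᵇ ℝ))
    (f : Z →ᵇ ℝ) : convMap p μ ν f = μ (innerConv p ν f) :=
  rfl

theorem coe_innerConv_evalCLM (p : X → Y → Z) (f : Z →ᵇ ℝ) (y : Y) :
    ⇑(innerConv p (evalCLM ℝ y) f) = fun x => f (p x y) :=
  rfl

theorem continuous_innerConv (p : X → Y → Z) (f : Z →ᵇ ℝ) :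
    Continuous fun ν : WeakDual ℝ (Y →ᵇ ℝ) =>
      (innerConv p (WeakDual.toStrongDual ν) f : X → ℝ) :=
  continuous_pi fun x => WeakDual.eval_continuous
    (f.compContinuous ⟨fun y => p x y, continuous_of_discreteTopology⟩)

theorem image_innerConv_evalClosure (p : X → Y → Z) (f : Z →ᵇ ℝ) :
    (fun ν : WeakDual ℝ (Y →ᵇ ℝ) => (innerConv p (WeakDual.toStrongDual ν) f : X → ℝ)) ''
        evalClosure ℝ Y =
      closure (Set.range fun y x => f (p x y)) := by
  rw [evalClosure, image_closure_of_isCompact (isCompact_evalClosure ℝ Y)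
    (continuous_innerConv p f).continuousOn, ← Set.range_comp]
  exact congrArg (closure <| Set.range ·) (funext (coe_innerConv_evalCLM p f))

theorem stmt12_general (p : X → Y → Z) (μ : StrongDual ℝ (X →ᵇ ℝ)) (f : Z →ᵇ ℝ)
    (hcont : ContinuousOn
      (fun ν : WeakDual ℝ (Y →ᵇ ℝ) => convMap p μ (WeakDual.toStrongDual ν) f)
      (evalClosure ℝ Y)) :
    ContinuousOn (applyDual μ) (closure (Set.range fun y x => f (p x y))) := by
  rw [← image_innerConv_evalClosure p f]
  refine continuousOn_image_of_isCompact_of_comp (isCompact_evalClosure ℝ Y)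
    (continuous_innerConv p f).continuousOn (hcont.congr fun ν _ => ?_)
  simp only [Function.comp_apply, applyDual_coe, convMap_apply]

end Convolution

/-- If `ν ↦ μ ⋆ ν` is weak* continuous on the uniform compactification `K`, then `μ` is
continuous on the pointwise closure of the right orbit of any `f ∈ U_b(X)`. -/
theorem stmt12 {X : Type*} [Semigroup X] [TopologicalSpace X] [DiscreteTopology X]
    (μ : StrongDual ℝ (X →ᵇ ℝ)) (f : X →ᵇ ℝ)
    (hcont : ContinuousOn
      (fun ν : WeakDual ℝ (X →ᵇ ℝ) =>
        StrongDual.toWeakDual (convMap (· * ·) μ (WeakDual.toStrongDual ν)))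
      (closure (Set.range fun x : X => StrongDual.toWeakDual (evalCLM ℝ x)))) :
    ContinuousOn (applyDual μ) (closure (Set.range fun x : X => fun z : X => f (z * x))) :=
  stmt12_general (· * ·) μ f ((WeakDual.eval_continuous f).comp_continuousOn hcont)
end
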